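/- Let g > 0 and let ζ: ℝ² → ℝ be C² with ζ(x,y) ≥ m for all (x,y) and |∇ζ(x,y)| ≤ M for all (x,y). Let (x(t), y(t)) be a C² solution of the steady John–Sclavounos equations on an interval J containing 0, with initial position x₀ = (x(0), y(0)) and initial velocity u₀ = (ẋ(0), ẏ(0)), and let H₀ = g ζ(x₀) + ½|u₀|² + ½(u₀·∇ζ(x₀))². Then for every t ∈ J, ẋ(t)² + ẏ(t)² ≤ 2(1 + M²)(H₀ − g m). In particular the particle velocity remains bounded for all time and no finite-time blowup of the velocity can occur. -/

import Mathlib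

noncomputable section

/-- Partial derivative of `ζ(x,y)` with respect to `x`. -/
def dx (ζ : ℝ × ℝ → ℝ) (p : ℝ × ℝ) : ℝ := fderiv ℝ ζ p (1, 0)

/-- Partial derivative of `ζ(x,y)` with respect to `y`. -/
def dy (ζ : ℝ × ℝ → ℝ) (p : ℝ × ℝ) : ℝ := fderiv ℝ ζ p (0, 1)

def dxx (ζ : ℝ × ℝ → ℝ) (p : ℝ × ℝ) : ℝ := fderiv ℝ (dx ζ) p (1, 0)
def dxy (ζ : ℝ × ℝ → ℝ) (p : ℝ × ℝ) : ℝ := fderiv ℝ (dx ζ) p (0, 1)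
def dyy (ζ : ℝ × ℝ → ℝ) (p : ℝ × ℝ) : ℝ := fderiv ℝ (dy ζ) p (0, 1)

/-- The steady John–Sclavounos equations for a horizontal trajectory `(x(t), y(t))` on
the time-independent surface `z = ζ(x,y)`, at time `t`, with gravity `g`:
`(1+ζ_x²)ẍ + ζ_xζ_y ÿ + Q ζ_x = 0` and `(1+ζ_y²)ÿ + ζ_xζ_y ẍ + Q ζ_y = 0`, where
`Q = ζ_xx ẋ² + 2ζ_xy ẋẏ + ζ_yy ẏ² + g`. -/
def SteadyJSEq (g : ℝ) (ζ : ℝ × ℝ → ℝ) (x y : ℝ → ℝ) (t : ℝ) : Prop :=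
  (1 + dx ζ (x t, y t) ^ 2) * deriv (deriv x) t
      + dx ζ (x t, y t) * dy ζ (x t, y t) * deriv (deriv y) t
      + (dxx ζ (x t, y t) * (deriv x t) ^ 2
          + 2 * dxy ζ (x t, y t) * deriv x t * deriv y t
          + dyy ζ (x t, y t) * (deriv y t) ^ 2 + g) * dx ζ (x t, y t) = 0
  ∧ (1 + dy ζ (x t, y t) ^ 2) * deriv (deriv y) t
      + dx ζ (x t, y t) * dy ζ (x t, y t) * deriv (deriv x) t
      + (dxx ζ (x t, y t) * (deriv x t) ^ 2
          + 2 * dxy ζ (x t, y t) * deriv x t * deriv y t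
          + dyy ζ (x t, y t) * (deriv y t) ^ 2 + g) * dy ζ (x t, y t) = 0

theorem differentiable_dx {ζ : ℝ × ℝ → ℝ} (hζ : ContDiff ℝ 2 ζ) : Differentiable ℝ (dx ζ) :=
  ((hζ.fderiv_right (m := 1) (by norm_num)).clm_apply contDiff_const).differentiable one_ne_zero

theorem differentiable_dy {ζ : ℝ × ℝ → ℝ} (hζ : ContDiff ℝ 2 ζ) : Differentiable ℝ (dy ζ) :=
  ((hζ.fderiv_right (m := 1) (by norm_num)).clm_apply contDiff_const).differentiable one_ne_zero

/-- Equality of mixed partial derivatives. -/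
theorem dx_dy_eq_dxy {ζ : ℝ × ℝ → ℝ} (hζ : ContDiff ℝ 2 ζ) (p : ℝ × ℝ) :
    dx (dy ζ) p = dxy ζ p := by
  have hd : DifferentiableAt ℝ (fderiv ℝ ζ) p :=
    (hζ.fderiv_right (m := 1) (by norm_num)).differentiable one_ne_zero p
  have partial_apply (v w : ℝ × ℝ) :
      fderiv ℝ (fun q => fderiv ℝ ζ q v) p w = fderiv ℝ (fderiv ℝ ζ) p w v := by
    rw [fderiv_clm_apply hd (differentiableAt_const v)]
    simp
  have hsymm : IsSymmSndFDerivAt ℝ ζ p := hζ.contDiffAt.isSymmSndFDerivAt (by simp)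
  calc dx (dy ζ) p = fderiv ℝ (fderiv ℝ ζ) p (1, 0) (0, 1) := partial_apply _ _
    _ = fderiv ℝ (fderiv ℝ ζ) p (0, 1) (1, 0) := hsymm _ _
    _ = dxy ζ p := (partial_apply _ _).symm

/-- The chain rule along a planar curve, in terms of partial derivatives. -/
theorem hasDerivAt_comp_curve {f : ℝ × ℝ → ℝ} {x y : ℝ → ℝ} {x' y' t : ℝ}
    (hf : DifferentiableAt ℝ f (x t, y t)) (hx : HasDerivAt x x' t) (hy : HasDerivAt y y' t) :
    HasDerivAt (fun s => f (x s, y s)) (x' * dx f (x t, y t) + y' * dy f (x t, y t)) t := by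
  have h := hf.hasFDerivAt.comp_hasDerivAt t (hx.prodMk hy)
  have hsplit : ((x', y') : ℝ × ℝ) = x' • (1, 0) + y' • (0, 1) := by simp
  rw [hsplit, map_add, map_smul, map_smul] at h
  exact h

/-- The energy of a trajectory of the steady John–Sclavounos equations. -/
def energy (g : ℝ) (ζ : ℝ × ℝ → ℝ) (x y : ℝ → ℝ) (t : ℝ) : ℝ :=
  g * ζ (x t, y t) + (1 / 2) * ((deriv x t) ^ 2 + (deriv y t) ^ 2)
    + (1 / 2) * (deriv x t * dx ζ (x t, y t) + deriv y t * dy ζ (x t, y t)) ^ 2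

/-- The energy is stationary at every time at which the steady equations hold. -/
theorem SteadyJSEq.hasDerivAt_energy {g : ℝ} {ζ : ℝ × ℝ → ℝ} (hζ : ContDiff ℝ 2 ζ)
    {x y : ℝ → ℝ} (hx : ContDiff ℝ 2 x) (hy : ContDiff ℝ 2 y) {t : ℝ}
    (h : SteadyJSEq g ζ x y t) : HasDerivAt (energy g ζ x y) 0 t := by
  have hx₁ := (hx.differentiable two_ne_zero t).hasDerivAt
  have hy₁ := (hy.differentiable two_ne_zero t).hasDerivAt
  have hx₂ := (hx.differentiable_deriv_two t).hasDerivAt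
  have hy₂ := (hy.differentiable_deriv_two t).hasDerivAt
  have hz := hasDerivAt_comp_curve (hζ.differentiable two_ne_zero _) hx₁ hy₁
  have hzx := hasDerivAt_comp_curve (differentiable_dx hζ _) hx₁ hy₁
  have hzy := hasDerivAt_comp_curve (differentiable_dy hζ _) hx₁ hy₁
  rw [dx_dy_eq_dxy hζ] at hzy
  change HasDerivAt _ (deriv x t * dxx ζ (x t, y t) + deriv y t * dxy ζ (x t, y t)) t at hzx
  change HasDerivAt _ (deriv x t * dxy ζ (x t, y t) + deriv y t * dyy ζ (x t, y t)) t at hzy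
  have hE := ((hz.const_mul g).add (((hx₂.pow 2).add (hy₂.pow 2)).const_mul (1 / 2))).add
    ((((hx₂.mul hzx).add (hy₂.mul hzy)).pow 2).const_mul (1 / 2))
  refine hE.congr_deriv ?_
  obtain ⟨h₁, h₂⟩ := h
  simp only [Pi.add_apply, Pi.mul_apply]
  push_cast
  linear_combination deriv x t * h₁ + deriv y t * h₂

/-- Conservation of energy along solutions on an interval. -/
theorem energy_eq_of_steadyJSEq {g : ℝ} {ζ : ℝ × ℝ → ℝ} (hζ : ContDiff ℝ 2 ζ)
    {x y : ℝ → ℝ} (hx : ContDiff ℝ 2 x) (hy : ContDiff ℝ 2 y)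
    {J : Set ℝ} (hJ : J.OrdConnected) (hJS : ∀ t ∈ J, SteadyJSEq g ζ x y t)
    {s t : ℝ} (hs : s ∈ J) (ht : t ∈ J) : energy g ζ x y t = energy g ζ x y s := by
  have h := Convex.norm_image_sub_le_of_norm_hasDerivWithin_le (C := 0)
    (fun r hr => ((hJS r hr).hasDerivAt_energy hζ hx hy).hasDerivWithinAt)
    (fun _ _ => by simp) hJ.convex hs ht
  rw [zero_mul, norm_le_zero_iff] at h
  exact sub_eq_zero.mp h

/-- (No finite-time blowup for steady surfaces.) If `ζ ≥ m` and
`|∇ζ| ≤ M` everywhere, then along any C² solution of the steady John–Sclavounos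
equations on an interval `J` containing `0`, with
`H₀ = g ζ(x₀) + ½|u₀|² + ½(u₀·∇ζ(x₀))²`, the velocity satisfies
`ẋ(t)² + ẏ(t)² ≤ 2(1+M²)(H₀ − g m)` for all `t ∈ J`. -/
theorem steadyJS_no_blowup
    (g : ℝ) (hg : 0 < g) (ζ : ℝ × ℝ → ℝ) (hζ : ContDiff ℝ 2 ζ)
    (m M : ℝ) (hm : ∀ p : ℝ × ℝ, m ≤ ζ p)
    (hM : ∀ p : ℝ × ℝ, Real.sqrt ((dx ζ p) ^ 2 + (dy ζ p) ^ 2) ≤ M)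
    (x y : ℝ → ℝ) (hx : ContDiff ℝ 2 x) (hy : ContDiff ℝ 2 y)
    (J : Set ℝ) (hJ : J.OrdConnected) (h0 : (0 : ℝ) ∈ J)
    (hJS : ∀ t ∈ J, SteadyJSEq g ζ x y t)
    (H₀ : ℝ)
    (hH₀ : H₀ = g * ζ (x 0, y 0) + (1 / 2) * ((deriv x 0) ^ 2 + (deriv y 0) ^ 2)
      + (1 / 2) * (deriv x 0 * dx ζ (x 0, y 0) + deriv y 0 * dy ζ (x 0, y 0)) ^ 2) :
    ∀ t ∈ J, (deriv x t) ^ 2 + (deriv y t) ^ 2 ≤ 2 * (1 + M ^ 2) * (H₀ - g * m) := by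
  intro t ht
  have hcons : energy g ζ x y t = H₀ :=
    (energy_eq_of_steadyJSEq hζ hx hy hJ hJS h0 ht).trans hH₀.symm
  have hpot : g * m ≤ g * ζ (x t, y t) := mul_le_mul_of_nonneg_left (hm _) hg.le
  have hkin : (deriv x t) ^ 2 + (deriv y t) ^ 2 ≤ 2 * (H₀ - g * m) := by
    unfold energy at hcons
    linarith [sq_nonneg (deriv x t * dx ζ (x t, y t) + deriv y t * dy ζ (x t, y t))]
  have hH : 0 ≤ H₀ - g * m := by linarith [sq_nonneg (deriv x t), sq_nonneg (deriv y t)]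
  linarith [mul_nonneg (sq_nonneg M) hH]

end
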